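/- With $f$, $t_+$, $t_-$ as in the context: $\tfrac{1}{t_+(x)} + \tfrac{1}{t_-(x)} = \tfrac{2}{3} f'''(0) + O(\sqrt{x})$ as $x \to 0^+$. (This quantity is the difference of Funk metrics $\Theta((0,x),(1,0)) - \Theta((0,x),(-1,0))$.) -/

import Mathlib

open Filter Topology Asymptotics

set_option maxHeartbeats 1600000 in
lemma aux_core (c C s u x : ℝ) (hC : 0 ≤ C) (hs : 0 < s) (hu : 0 < u) (hs1 : s ≤ 1) (hu1 : u ≤ 1)
    (hs2 : (|c| + C) * s ≤ 1/16) (hu2 : (|c| + C) * u ≤ 1/16)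
    (h1 : |x - s^2/4 - c * s^3/6| ≤ C * s^4) (h2 : |x - u^2/4 + c * u^3/6| ≤ C * u^4) :
    |1/s - 1/u - 2/3*c| ≤ 6 * (|c| * (4*|c|+68*C)^2 + 68*C) * Real.sqrt x := by
  have hK : 0 ≤ |c| := abs_nonneg c
  have hc1 := neg_abs_le c
  have hc2 := le_abs_self c
  generalize hKe : |c| = K at *
  have key : ∀ v : ℝ, 0 < v → v ≤ 1 → (K + C) * v ≤ 1/16 →
      K * v^3/6 + C * v^4 ≤ v^2/8 := by
    intro v hv hv1 hv2
    have e1 : C * v^4 ≤ C * v^3 := by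
      apply mul_le_mul_of_nonneg_left _ hC
      exact pow_le_pow_of_le_one hv.le hv1 (by norm_num)
    have e2 : 0 ≤ K * v^3 := by positivity
    have e3 : (K+C)*v*v^2 ≤ 1/16*v^2 := mul_le_mul_of_nonneg_right hv2 (by positivity)
    nlinarith [sq_nonneg v]
  have ks := key s hs hs1 hs2
  have ku := key u hu hu1 hu2
  have hs3 : |c * s^3| ≤ K * s^3 := by rw [abs_mul, hKe, abs_of_pos (pow_pos hs 3)]
  have hu3 : |c * u^3| ≤ K * u^3 := by rw [abs_mul, hKe, abs_of_pos (pow_pos hu 3)]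
  obtain ⟨a1, a2⟩ := abs_le.1 hs3
  obtain ⟨b1, b2⟩ := abs_le.1 hu3
  have h1' := abs_le.1 h1
  have h2' := abs_le.1 h2
  have xs1 : s^2/8 ≤ x := by linarith [h1'.1]
  have xs2 : x ≤ 3*s^2/8 := by linarith [h1'.2]
  have xu1 : u^2/8 ≤ x := by linarith [h2'.1]
  have xu2 : x ≤ 3*u^2/8 := by linarith [h2'.2]
  have us : u ≤ 2*s := by
    apply le_of_sq_le_sq _ (by positivity) <;> nlinarith
  have su : s ≤ 2*u := by
    apply le_of_sq_le_sq _ (by positivity) <;> nlinarith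
  obtain ⟨Q, hQ⟩ : ∃ Q, Q = (u-s) - (2*c/3)*(s^2-s*u+u^2) := ⟨_, rfl⟩
  have hu4 : u^4 ≤ 16*s^4 := by
    calc u^4 ≤ (2*s)^4 := by gcongr
      _ = _ := by ring
  have hQ1 : |Q| ≤ 68*C*s^3 := by
    have : Q*(s+u) = 4*((x - s^2/4 - c * s^3/6) - (x - u^2/4 + c * u^3/6)) := by rw [hQ]; ring
    have h3 : |Q*(s+u)| ≤ 68*C*s^4 := by
      have := mul_le_mul_of_nonneg_left hu4 hC
      rw [‹Q*(s+u) = _›, abs_le]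
      constructor <;> linarith [h1'.1, h1'.2, h2'.1, h2'.2]
    rw [abs_mul, abs_of_pos (by positivity : 0 < s+u)] at h3
    have h4 : |Q| * s ≤ 68*C*s^3 * s := by nlinarith [abs_nonneg Q]
    exact le_of_mul_le_mul_right h4 hs
  have hD : |u-s| ≤ (4*K+68*C)*s^2 := by
    have e : u - s = (2*c/3)*(s^2-s*u+u^2) + Q := by rw [hQ]; ring
    have e1 : |(2*c/3)*(s^2-s*u+u^2)| ≤ 4*K*s^2 := by
      rw [abs_mul, abs_div, abs_mul, hKe, abs_of_nonneg (by nlinarith [sq_nonneg (s-u)] : 0 ≤ s^2-s*u+u^2)]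
      norm_num
      have : s^2-s*u+u^2 ≤ 6*s^2 := by
        nlinarith only [mul_le_mul us us hu.le (by positivity : 0 ≤ 2*s), mul_pos hs hu, sq_nonneg s]
      calc 2*K/3*(s^2-s*u+u^2) ≤ 2*K/3*(6*s^2) := by gcongr
        _ = 4*K*s^2 := by ring
    have e2 : 68*C*s^3 ≤ 68*C*s^2 := by
      apply mul_le_mul_of_nonneg_left _ (by positivity)
      exact pow_le_pow_of_le_one hs.le hs1 (by norm_num)
    rw [e]
    refine (abs_add_le _ _).trans ?_
    linarith
  have hE : (1/s - 1/u - 2/3*c)*(s*u) = (2*c/3)*(u-s)^2 + Q := by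
    rw [hQ]; field_simp; ring
  set M := K * (4*K+68*C)^2 + 68*C with hM
  have hM0 : 0 ≤ M := by positivity
  have hEb : |1/s - 1/u - 2/3*c| * (s*u) ≤ M * s^3 := by
    rw [← abs_of_pos (by positivity : 0 < s*u), ← abs_mul, hE]
    refine (abs_add_le _ _).trans ?_
    have e1 : |(2*c/3)*(u-s)^2| ≤ K * (4*K+68*C)^2*s^3 := by
      rw [abs_mul, abs_div, abs_mul, hKe, abs_pow]
      norm_num
      have e3 : |u-s|^2 ≤ ((4*K+68*C)*s^2)^2 := by gcongr
      have e4 : s^4 ≤ s^3 := pow_le_pow_of_le_one hs.le hs1 (by norm_num)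
      rw [← sq_abs (u-s)]
      calc 2*K/3*|u-s|^2 ≤ K*((4*K+68*C)*s^2)^2 := by gcongr; linarith
        _ = K*(4*K+68*C)^2*s^4 := by ring
        _ ≤ _ := by gcongr
    rw [hM]; linarith
  have hE2 : |1/s - 1/u - 2/3*c| ≤ 2*M*s := by
    have : |1/s - 1/u - 2/3*c| * (s*u) ≤ 2*M*s*(s*u) := by
      refine hEb.trans ?_
      have : M*s^2*s ≤ M*s^2*(2*u) := by gcongr
      nlinarith
    exact le_of_mul_le_mul_right this (by positivity)
  have hsx : s ≤ 3*Real.sqrt x := by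
    have : s/3 ≤ Real.sqrt x := Real.le_sqrt_of_sq_le (by nlinarith)
    linarith
  calc _ ≤ 2*M*s := hE2
    _ ≤ 2*M*(3*Real.sqrt x) := by gcongr
    _ = _ := by ring

lemma aux_taylor (f : ℝ → ℝ) (hf : ContDiffAt ℝ 4 f 0)
    (hf0 : f 0 = 0) (hf1 : deriv f 0 = 0) (hf2 : deriv (deriv f) 0 = 1/2) :
    ∃ C : ℝ, 0 ≤ C ∧ ∀ᶠ t in 𝓝 (0:ℝ),
      |f t - t^2/4 - deriv (deriv (deriv f)) 0 * t^3/6| ≤ C * t^4 := by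
  obtain ⟨U, hU, hfU⟩ := hf.contDiffOn (m := 4) le_rfl (by simp)
  obtain ⟨r, hr, hrU⟩ := Metric.mem_nhds_iff.1 (show U ∈ 𝓝 (0:ℝ) by simpa using hU)
  have h0 : (0:ℝ) ∈ Metric.ball (0:ℝ) r := Metric.mem_ball_self hr
  have ho := taylor_isLittleO (n := 4) (convex_ball (0:ℝ) r) h0 (hfU.mono hrU)
  rw [(Metric.isOpen_ball).nhdsWithin_eq h0] at ho
  have hd : ∀ n, iteratedDerivWithin n f (Metric.ball (0:ℝ) r) 0 = deriv^[n] f 0 := fun n =>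
    iteratedDerivWithin_of_isOpen_eq_iterate Metric.isOpen_ball h0
  have hb := ho.bound (c := 1) one_pos
  refine ⟨1 + |deriv^[4] f 0|, by positivity, ?_⟩
  filter_upwards [hb] with t ht
  have e2 : deriv^[2] f 0 = 1/2 := hf2
  have e3 : deriv^[3] f 0 = deriv (deriv (deriv f)) 0 := rfl
  have e1 : deriv^[1] f 0 = 0 := hf1
  simp only [taylorWithinEval_succ, taylor_within_zero_eval, hd, zero_add, e1, e2, e3, hf0, sub_zero,
    smul_eq_mul, Nat.reduceAdd, Real.norm_eq_abs] at ht
  generalize deriv^[4] f 0 = d at *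
  generalize deriv (deriv (deriv f)) 0 = c at *
  have ht4 : 0 ≤ t^4 := by positivity
  norm_num [Nat.factorial] at ht
  rw [← abs_pow, abs_of_nonneg ht4] at ht
  have h1 : |d * t^4| = |d| * t^4 := by rw [abs_mul, abs_of_nonneg ht4]
  have h2 := abs_le.1 h1.le
  have h3 := abs_le.1 ht
  have h4 : 0 ≤ |d| * t^4 := by positivity
  rw [abs_le]
  constructor <;> nlinarith [h2.1, h2.2, h3.1, h3.2]

theorem stmt_7 (f tp tm : ℝ → ℝ)
    (hf : ContDiffAt ℝ 4 f 0)
    (hf0 : f 0 = 0) (hf1 : deriv f 0 = 0) (hf2 : deriv (deriv f) 0 = 1/2)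
    (hfpos : ∀ᶠ t in 𝓝 (0:ℝ), 0 < deriv (deriv f) t)
    (htp : ∀ᶠ x in 𝓝[>] (0:ℝ), 0 < tp x ∧ f (tp x) = x)
    (htm : ∀ᶠ x in 𝓝[>] (0:ℝ), tm x < 0 ∧ f (tm x) = x)
    (htp0 : Tendsto tp (𝓝[>] (0:ℝ)) (𝓝 0))
    (htm0 : Tendsto tm (𝓝[>] (0:ℝ)) (𝓝 0)) :
    (fun x => (1 / tp x + 1 / tm x) - 2/3 * deriv (deriv (deriv f)) 0)
      =O[𝓝[>] (0:ℝ)] fun x => Real.sqrt x := by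
  obtain ⟨C, hC, hT⟩ := aux_taylor f hf hf0 hf1 hf2
  generalize deriv (deriv (deriv f)) 0 = c at *
  have small : ∀ᶠ t in 𝓝 (0:ℝ), |t| ≤ 1 ∧ (|c| + C) * |t| ≤ 1/16 := by
    have c1 : ContinuousAt (fun t : ℝ => |t|) 0 := by fun_prop
    have c2 : ContinuousAt (fun t : ℝ => (|c| + C) * |t|) 0 := by fun_prop
    exact (c1.eventually_le_const (by norm_num)).and (c2.eventually_le_const (by norm_num))
  refine IsBigO.of_bound (6 * (|c| * (4*|c|+68*C)^2 + 68*C)) ?_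
  filter_upwards [htp, htm, htp0.eventually hT, htm0.eventually hT, htp0.eventually small,
    htm0.eventually small] with x h1 h2 h3 h4 h5 h6
  rw [h1.2] at h3
  rw [h2.2] at h4
  rw [abs_of_pos h1.1] at h5
  rw [abs_of_neg h2.1] at h6
  have := aux_core c C (tp x) (-tm x) x hC h1.1 (by linarith [h2.1]) h5.1 h6.1 h5.2 h6.2 h3
    (by convert h4 using 2 <;> ring)
  rw [Real.norm_eq_abs, Real.norm_eq_abs, abs_of_nonneg (Real.sqrt_nonneg x)]
  convert this using 2
  rw [one_div_neg_eq_neg_one_div]; ring
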